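/- Let d ≥ 2, let H be a d×d Hermitian matrix and ρ a d×d density matrix such that ΔH := H − (Tr[H]/d)·I and Δρ := ρ − I/d are both nonzero. For p ∈ ℕ set Σ^(p) := ∫_{U(d)} (Tr[U ρ U† H] − Tr[H]/d)^p dμ_Haar(U), Σ² := Tr[ΔH²]·Tr[Δρ²]/(d²−1), and G_p := (p−1)!!·(Σ²)^{p/2}. Then for every odd integer p with 3 ≤ p, p² ≤ d, and 6p^{7/2} < d², one has |Σ^(p)| ≤ G_p · √(η_{ΔH}) · (1 − 6p^{7/2}/d²)^{−1} · ( ⌈p!/e⌉/(p−1)!! − 1 ) · Cat_p · (1 + p²/d), where Cat_p = (1/(p+1))·C(2p,p) is the p-th Catalan number and e is Euler's number. -/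

import Mathlib

open MeasureTheory Matrix
open scoped ComplexOrder

noncomputable instance unitaryGroup.measurableSpace (d : ℕ) :
    MeasurableSpace (Matrix.unitaryGroup (Fin d) ℂ) := borel _

instance unitaryGroup.borelSpace (d : ℕ) :
    BorelSpace (Matrix.unitaryGroup (Fin d) ℂ) := ⟨rfl⟩

/-- `η_Θ := (Σ_i |λ_i|³)² / (Σ_i λ_i²)³` for a Hermitian matrix `Θ` with eigenvalues `λ_i`. -/
noncomputable def eta {d : ℕ} {Θ : Matrix (Fin d) (Fin d) ℂ} (hΘ : Θ.IsHermitian) : ℝ :=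
  (∑ i, |hΘ.eigenvalues i| ^ 3) ^ 2 / (∑ i, hΘ.eigenvalues i ^ 2) ^ 3

/-!
The twirl `T = ∫ (U Δρ U†)^{⊗p} dμ(U)` commutes with every `V^{⊗p}` for `V` unitary, hence with
`A^{⊗p}` for every matrix `A`, so for `p ≤ d` it is a combination `∑ σ, c σ • P_σ` of permutation
operators. Taking the trace against `ΔH^{⊗p}` gives `Σ^(p) = ∑ σ, c σ * s_σ(ΔH)`, where `s_σ` is the
product over the cycles of `σ` of the power sums of the eigenvalues. As `ΔH` has trace `0`, only
derangements contribute, and for odd `p` each of them has a cycle of length at least `3`, whose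
power sum produces the factor `√η`. Taking the trace against `P_τ` shows that the convolution of `c`
with `τ ↦ d ^ #cycles(τ)` is `τ ↦ s_τ(Δρ)`; the kernel is diagonally dominant when `p² ≤ d`, which
bounds `c`. The number of derangements is finally compared with `(⌈p!/e⌉ − (p−1)‼) * Cat_p`.
-/

section TensorPower

open Equiv (Perm)

variable {n κ R : Type*} [Fintype κ] [CommSemiring R]

/-- The tensor power `A^{⊗κ}` of a square matrix, with rows and columns indexed by the tuples
`κ → n`. -/
def tensorPow (κ : Type*) [Fintype κ] (A : Matrix n n R) : Matrix (κ → n) (κ → n) R :=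
  of fun i j => ∏ k, A (i k) (j k)

/-- The permutation operator `|j⟩ ↦ |j ∘ σ⟩` on tensors. With this convention `σ ↦ tensorPerm n R σ`
is multiplication reversing. -/
def tensorPerm (n R : Type*) [DecidableEq n] [CommSemiring R] (σ : Perm κ) :
    Matrix (κ → n) (κ → n) R :=
  of fun i j => if i = j ∘ σ then 1 else 0

/-- The product over the cycles of `σ` of the power sums `∑ x, l x ^ m`, where `m` is the length of
the cycle (see `cycleSum_eq_prod`), encoded as a sum over the functions constant on cycles. -/
def cycleSum [Fintype n] [DecidableEq n] [DecidableEq κ] (l : n → R) (σ : Perm κ) : R :=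
  ∑ b : κ → n with b ∘ σ = b, ∏ k, l (b k)

theorem tensorPow_diagonal [DecidableEq n] (l : n → R) :
    tensorPow κ (diagonal l) = diagonal fun i => ∏ k, l (i k) := by
  ext i j
  simp only [tensorPow, of_apply, diagonal_apply, Fintype.prod_ite_zero, funext_iff]

variable [Fintype n] [DecidableEq κ]

theorem tensorPow_mul (A B : Matrix n n R) :
    tensorPow κ (A * B) = tensorPow κ A * tensorPow κ B := by
  ext i j
  simp only [tensorPow, of_apply, Matrix.mul_apply, ← Finset.prod_mul_distrib,
    Finset.prod_univ_sum, Fintype.piFinset_univ]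

theorem trace_tensorPow (A : Matrix n n R) :
    (tensorPow κ A).trace = A.trace ^ Fintype.card κ := by
  simp only [tensorPow, trace, diag_apply, of_apply, ← Finset.card_univ, ← Finset.prod_const,
    Finset.prod_univ_sum, Fintype.piFinset_univ]

theorem apply_comp_eq_zero_of_commute_tensorPow {T : Matrix (κ → n) (κ → n) R}
    (hT : ∀ A : Matrix n n R, Commute (tensorPow κ A) T) (ι : κ ↪ n) {f : κ → κ}
    (hf : ¬ f.Surjective) : T (ι ∘ f) ι = 0 := by
  classical
  simp only [Function.Surjective, not_forall, not_exists] at hf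
  obtain ⟨m, hm⟩ := hf
  have h := congrFun₂ (hT (diagonal fun x => if x = ι m then 0 else 1)) (ι ∘ f) ι
  rw [tensorPow_diagonal, diagonal_mul, mul_diagonal,
    Finset.prod_eq_one fun k _ => by simp [hm k],
    Finset.prod_eq_zero (Finset.mem_univ m) (by simp)] at h
  simpa using h

variable [DecidableEq n]

theorem tensorPerm_mul_tensorPerm (σ τ : Perm κ) :
    tensorPerm n R σ * tensorPerm n R τ = tensorPerm n R (τ * σ) := by
  ext i j
  simp only [tensorPerm, Matrix.mul_apply, of_apply, mul_ite, mul_one, mul_zero,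
    Finset.sum_ite_eq', Finset.mem_univ, if_true]
  rfl

theorem commute_tensorPow_tensorPerm (A : Matrix n n R) (σ : Perm κ) :
    Commute (tensorPow κ A) (tensorPerm n R σ) := by
  ext i j
  have hσ (a : κ → n) : i = a ∘ σ ↔ i ∘ σ.symm = a := (σ.comp_symm_eq a i).symm
  simp only [tensorPow, tensorPerm, Matrix.mul_apply, of_apply, mul_ite, ite_mul, mul_one, one_mul,
    mul_zero, zero_mul, Finset.sum_ite_eq', Finset.sum_ite_eq, Finset.mem_univ, if_true, hσ]
  exact Fintype.prod_equiv σ _ _ fun k => by simp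

theorem trace_tensorPow_conj_mul_tensorPerm {V W : Matrix n n R} (h : W * V = 1)
    (A : Matrix n n R) (σ : Perm κ) :
    (tensorPow κ (V * A * W) * tensorPerm n R σ).trace
      = (tensorPow κ A * tensorPerm n R σ).trace := by
  rw [Matrix.mul_assoc, tensorPow_mul, Matrix.mul_assoc, trace_mul_comm, Matrix.mul_assoc,
    ← (commute_tensorPow_tensorPerm V σ).eq, ← Matrix.mul_assoc, ← tensorPow_mul, Matrix.mul_assoc,
    h, Matrix.mul_one]

theorem trace_tensorPow_diagonal_mul_tensorPerm (l : n → R) (σ : Perm κ) :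
    (tensorPow κ (diagonal l) * tensorPerm n R σ).trace = cycleSum l σ := by
  simp [tensorPow_diagonal, tensorPerm, cycleSum, trace, diagonal_mul, Finset.sum_filter, eq_comm]

theorem trace_tensorPerm (σ : Perm κ) : (tensorPerm n R σ).trace = cycleSum (1 : n → R) σ := by
  rw [← trace_tensorPow_diagonal_mul_tensorPerm, tensorPow_diagonal]
  simp

/-- Apply the commutation to the matrix sending the basis vector `e_{ι k}` to `e_{j k}`: the image
of the tensor `e_ι` under `T` then determines the image of `e_j`. -/
theorem apply_eq_sum_of_commute_tensorPow {T : Matrix (κ → n) (κ → n) R}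
    (hT : ∀ A : Matrix n n R, Commute (tensorPow κ A) T) (ι : κ ↪ n) (i j : κ → n) :
    T i j = ∑ f : κ → κ, if i = j ∘ f then T (ι ∘ f) ι else 0 := by
  let A : Matrix n n R := of fun x y => ∑ m, if y = ι m ∧ x = j m then 1 else 0
  have hcol (b : κ → n) : tensorPow κ A b ι = if b = j then 1 else 0 := by
    simp [tensorPow, A, ite_and, Fintype.prod_ite_zero, funext_iff]
  have hrow (a : κ → n) :
      tensorPow κ A i a = ∑ f : κ → κ, if a = ι ∘ f ∧ i = j ∘ f then 1 else 0 := by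
    simp only [tensorPow, A, of_apply, Finset.prod_univ_sum, Fintype.piFinset_univ,
      Fintype.prod_ite_zero, Finset.prod_const_one, funext_iff, forall_and, Function.comp_apply]
  have h := congrFun₂ (hT A) i ι
  simp only [Matrix.mul_apply, hcol, hrow, Finset.sum_mul, mul_ite, ite_mul, mul_one, one_mul,
    mul_zero, zero_mul, Finset.sum_ite_eq', Finset.mem_univ, if_true] at h
  rw [← h, Finset.sum_comm]
  exact Finset.sum_congr rfl fun f _ => by simp [ite_and]

/-- The part of Schur–Weyl duality in which there are at most as many tensor factors as dimensions:
the commutant of the tensor powers is spanned by the permutation operators. -/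
theorem eq_sum_smul_tensorPerm_of_commute_tensorPow {T : Matrix (κ → n) (κ → n) R}
    (hT : ∀ A : Matrix n n R, Commute (tensorPow κ A) T) (ι : κ ↪ n) :
    T = ∑ σ : Perm κ, T (ι ∘ σ) ι • tensorPerm n R σ := by
  ext i j
  rw [apply_eq_sum_of_commute_tensorPow hT ι, Matrix.sum_apply]
  symm
  refine Finset.sum_of_injOn (fun σ : Perm κ => ⇑σ) DFunLike.coe_injective.injOn (by simp)
    (fun f _ hf => ?_) fun σ _ => by simp [tensorPerm]
  rw [apply_comp_eq_zero_of_commute_tensorPow hT ι, ite_self]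
  exact fun hsurj => hf ⟨.ofBijective f (Finite.surjective_iff_bijective.mp hsurj), by simp, rfl⟩

end TensorPower

section UnitaryDensity

variable {n : Type*} [Fintype n] [DecidableEq n]

theorem infinite_sphere_complex : (Metric.sphere (0 : ℂ) 1).Infinite :=
  (isPreconnected_sphere (by simp) 0 1).infinite_of_nontrivial
    ⟨1, by simp, -1, by simp, by norm_num⟩

theorem diagonal_mem_unitaryGroup {z : n → ℂ} (hz : ∀ k, ‖z k‖ = 1) :
    diagonal z ∈ unitaryGroup n ℂ := by
  rw [mem_unitaryGroup_iff, star_eq_conjTranspose, diagonal_conjTranspose, diagonal_mul_diagonal,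
    ← diagonal_one]
  exact congrArg diagonal (funext fun k => by simp [Complex.mul_conj', hz k])

theorem eval_mul_diagonal_mul_eq_zero {P : MvPolynomial (n × n) ℂ}
    (hP : ∀ U ∈ unitaryGroup n ℂ, P.eval (fun x => U x.1 x.2) = 0) {V : Matrix n n ℂ}
    (hV : V ∈ unitaryGroup n ℂ) (z : n → ℂ) :
    P.eval (fun x => (V * diagonal z * star V) x.1 x.2) = 0 := by
  let Q : MvPolynomial n ℂ :=
    P.bind₁ fun x => ∑ k, MvPolynomial.C (V x.1 k * star V k x.2) * MvPolynomial.X k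
  have hQ (w : n → ℂ) : Q.eval w = P.eval (fun x => (V * diagonal w * star V) x.1 x.2) := by
    simp only [Q, MvPolynomial.eval, MvPolynomial.eval₂Hom_bind₁]
    refine congrArg (fun f => MvPolynomial.eval f P) (funext fun x => ?_)
    simp only [map_sum, map_mul, MvPolynomial.coe_eval₂Hom, MvPolynomial.eval₂_C,
      MvPolynomial.eval₂_X, RingHom.id_apply, mul_right_comm, Matrix.mul_apply (M := V * _),
      mul_diagonal]
  have hQ0 : Q = 0 := MvPolynomial.funext_set (fun _ => Metric.sphere 0 1)
    (fun _ => infinite_sphere_complex) fun w hw => by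
      rw [hQ, map_zero]
      have hw : diagonal w ∈ unitaryGroup n ℂ :=
        diagonal_mem_unitaryGroup fun k => by simpa using hw k trivial
      exact hP _ (mul_mem (mul_mem hV hw) (Unitary.star_mem hV))
  rw [← hQ, hQ0, map_zero]

theorem eval_eq_zero_of_isHermitian {P : MvPolynomial (n × n) ℂ}
    (hP : ∀ U ∈ unitaryGroup n ℂ, P.eval (fun x => U x.1 x.2) = 0) {A : Matrix n n ℂ}
    (hA : A.IsHermitian) : P.eval (fun x => A x.1 x.2) = 0 := by
  rw [hA.spectral_theorem, Unitary.conjStarAlgAut_apply]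
  exact eval_mul_diagonal_mul_eq_zero hP hA.eigenvectorUnitary.2 _

/-- Weyl's unitarian trick: the unitary group is Zariski dense in the space of all matrices. -/
theorem eval_eq_zero_of_forall_unitaryGroup {P : MvPolynomial (n × n) ℂ}
    (hP : ∀ U ∈ unitaryGroup n ℂ, P.eval (fun x => U x.1 x.2) = 0) (A : Matrix n n ℂ) :
    P.eval (fun x => A x.1 x.2) = 0 := by
  let X : Matrix n n ℂ := realPart A
  let Y : Matrix n n ℂ := imaginaryPart A
  let Q : Polynomial ℂ :=
    MvPolynomial.eval₂ Polynomial.C (fun x => .C (X x.1 x.2) + .C (Y x.1 x.2) * .X) P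
  have hQ (t : ℂ) : Q.eval t = P.eval (fun x => (X + t • Y) x.1 x.2) := by
    simp only [Q, MvPolynomial.polynomial_eval_eval₂]
    rw [MvPolynomial.eval, MvPolynomial.coe_eval₂Hom]
    congr 1
    · ext; simp
    · simp [mul_comm t]
  have hQ0 : Q = 0 := by
    refine Polynomial.eq_zero_of_infinite_isRoot _
      ((Set.infinite_range_of_injective Complex.ofReal_injective).mono ?_)
    rintro _ ⟨t, rfl⟩
    refine (hQ t).trans (eval_eq_zero_of_isHermitian hP ?_)
    exact (realPart A).2.add (.smul (Complex.conj_ofReal t) (imaginaryPart A).2)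
  rw [← realPart_add_I_smul_imaginaryPart A, ← hQ, hQ0, Polynomial.eval_zero]

theorem commute_tensorPow_of_forall_unitaryGroup {κ : Type*} [Fintype κ] [DecidableEq κ]
    {T : Matrix (κ → n) (κ → n) ℂ}
    (hT : ∀ U ∈ unitaryGroup n ℂ, Commute (tensorPow κ U) T) (A : Matrix n n ℂ) :
    Commute (tensorPow κ A) T := by
  ext i j
  let P : MvPolynomial (n × n) ℂ :=
    ∑ a, (∏ k, .X (i k, a k)) * .C (T a j) - ∑ b, .C (T i b) * ∏ k, .X (b k, j k)
  have hP (B : Matrix n n ℂ) :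
      P.eval (fun x => B x.1 x.2) = (tensorPow κ B * T) i j - (T * tensorPow κ B) i j := by
    simp [P, tensorPow, Matrix.mul_apply]
  rw [← sub_eq_zero, ← hP]
  refine eval_eq_zero_of_forall_unitaryGroup (fun U hU => ?_) A
  rw [hP, (hT U hU).eq, sub_self]

end UnitaryDensity

section Twirl

variable {n κ : Type*} [Fintype n] [DecidableEq n] [Fintype κ]

instance compactSpace_unitaryGroup : CompactSpace (unitaryGroup n ℂ) := by
  refine isCompact_iff_compactSpace.mp (IsCompact.of_isClosed_subset
    (isCompact_univ_pi fun _ => isCompact_univ_pi fun _ => isCompact_closedBall (0 : ℂ) 1)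
    isClosed_unitary fun U hU i _ j _ => ?_)
  simpa using entry_norm_bound_of_unitary hU i j

variable [MeasurableSpace (unitaryGroup n ℂ)]

/-- The twirl `∫ (U B U†)^{⊗κ} dμ(U)` of the tensor power of `B`, integrated entrywise. -/
noncomputable def twirl (κ : Type*) [Fintype κ] (μ : Measure (unitaryGroup n ℂ))
    (B : Matrix n n ℂ) : Matrix (κ → n) (κ → n) ℂ :=
  of fun i j => ∫ U : unitaryGroup n ℂ, tensorPow κ (U.1 * B * star U.1) i j ∂μ

variable [BorelSpace (unitaryGroup n ℂ)] (μ : Measure (unitaryGroup n ℂ)) [IsFiniteMeasure μ]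

theorem integrable_tensorPow_conj_apply (B : Matrix n n ℂ) (i j : κ → n) :
    Integrable (fun U : unitaryGroup n ℂ =>
      tensorPow κ (U.1 * B * star U.1) i j) μ := by
  refine Continuous.integrable_of_hasCompactSupport ?_ (.of_compactSpace _)
  have h : Continuous fun U : unitaryGroup n ℂ => (U : Matrix n n ℂ) := continuous_subtype_val
  exact continuous_finsetProd _ fun k _ =>
    ((h.matrix_mul continuous_const).matrix_mul h.star).matrix_elem _ _

variable [DecidableEq κ]

theorem trace_mul_twirl (M : Matrix (κ → n) (κ → n) ℂ) (B : Matrix n n ℂ) :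
    (M * twirl κ μ B).trace
      = ∫ U : unitaryGroup n ℂ, (M * tensorPow κ (U.1 * B * star U.1)).trace ∂μ := by
  have hint (i j : κ → n) := (integrable_tensorPow_conj_apply μ B j i).const_mul (M i j)
  simp only [trace, diag_apply, Matrix.mul_apply, twirl, of_apply]
  rw [integral_finsetSum _ fun i _ => integrable_finsetSum _ fun j _ => hint i j]
  refine Finset.sum_congr rfl fun i _ => ?_
  rw [integral_finsetSum _ fun j _ => hint i j]
  simp only [integral_const_mul]

variable [μ.IsMulLeftInvariant]

theorem commute_tensorPow_twirl (A B : Matrix n n ℂ) :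
    Commute (tensorPow κ A) (twirl κ μ B) := by
  refine commute_tensorPow_of_forall_unitaryGroup (fun V hV => ?_) A
  rw [commute_iff_eq, eq_comm, Matrix.ext_iff_trace_mul_left]
  intro M
  rw [← Matrix.mul_assoc, ← Matrix.mul_assoc, trace_mul_comm (M * twirl κ μ B),
    ← Matrix.mul_assoc, trace_mul_twirl, trace_mul_twirl,
    ← integral_mul_left_eq_self _ (⟨V, hV⟩ : unitaryGroup n ℂ)]
  refine integral_congr_ae (.of_forall fun U => ?_)
  have hVU : V * U.1 * B * star (V * U.1) * V = V * (U.1 * B * star U.1) := by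
    simp only [star_mul, Matrix.mul_assoc, Unitary.star_mul_self_of_mem hV, Matrix.mul_one]
  simp only [Submonoid.coe_mul]
  rw [Matrix.mul_assoc, trace_mul_comm, Matrix.mul_assoc, Matrix.mul_assoc M, ← tensorPow_mul,
    ← tensorPow_mul, hVU]

end Twirl

section CycleSum

open Equiv (Perm)
open Equiv.Perm (SameCycle)

variable {n κ : Type*} [Fintype κ]

open Classical in
/-- The length of the cycle `q` of `σ`. The cycles of `σ`, including its fixed points, are the
classes of `SameCycle.setoid σ`. -/
noncomputable def cycleLength (σ : Perm κ) (q : Quotient (SameCycle.setoid σ)) : ℕ :=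
  (Finset.univ.filter fun k => Quotient.mk _ k = q).card

theorem cycleLength_mk_of_fixed {σ : Perm κ} {k : κ} (hk : σ k = k) :
    cycleLength σ (Quotient.mk _ k) = 1 := by
  classical
  refine Finset.card_eq_one.mpr ⟨k, Finset.ext fun m => ?_⟩
  rw [Finset.mem_filter_univ, Finset.mem_singleton]
  refine ⟨fun h => ?_, fun h => h ▸ rfl⟩
  have hm : SameCycle σ m k := Quotient.exact h
  exact (hm.symm.eq_of_left hk).symm

theorem two_le_cycleLength {σ : Perm κ} (hσ : σ ∈ derangements κ)
    (q : Quotient (SameCycle.setoid σ)) : 2 ≤ cycleLength σ q := by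
  classical
  obtain ⟨k, rfl⟩ := Quotient.exists_rep q
  exact Finset.one_lt_card.mpr ⟨k, by simp, σ k, Finset.mem_filter_univ _ |>.mpr <|
    Quotient.sound (SameCycle.refl σ k).apply_left, (hσ k).symm⟩

theorem sum_cycleLength (σ : Perm κ) [Fintype (Quotient (SameCycle.setoid σ))] :
    ∑ q, cycleLength σ q = Fintype.card κ := by
  classical
  exact (Finset.card_eq_sum_card_fiberwise fun _ _ => Finset.mem_coe.mpr (Finset.mem_univ _)).symm

theorem exists_three_le_cycleLength (hκ : Odd (Fintype.card κ)) {σ : Perm κ}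
    (hσ : σ ∈ derangements κ) : ∃ q, 3 ≤ cycleLength σ q := by
  classical
  by_contra! hlt
  refine Nat.not_even_iff_odd.mpr hκ (sum_cycleLength σ ▸ Finset.even_sum _ fun q _ => ?_)
  rw [le_antisymm (Nat.le_of_lt_succ (hlt q)) (two_le_cycleLength hσ q)]
  exact even_two

variable [Fintype n]

section CommSemiring

variable [DecidableEq κ] [DecidableEq n] {R : Type*} [CommSemiring R]

theorem cycleSum_eq_prod (l : n → R) (σ : Perm κ) [Fintype (Quotient (SameCycle.setoid σ))] :
    cycleSum l σ = ∏ q, ∑ x, l x ^ cycleLength σ q := by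
  classical
  rw [Finset.prod_univ_sum, Fintype.piFinset_univ, cycleSum]
  symm
  refine Finset.sum_nbij (fun g k => g (Quotient.mk _ k)) (fun g _ => ?_) (fun g _ g' _ h => ?_)
    (fun b hb => ?_) fun g _ => ?_
  · exact Finset.mem_filter_univ _ |>.mpr <| funext fun k =>
      congrArg g (Quotient.sound (s := SameCycle.setoid σ) (SameCycle.refl σ k).apply_left)
  · exact (Quotient.mk_surjective (s := SameCycle.setoid σ)).injective_comp_right h
  · have hb : b ∘ σ = b := (Finset.mem_filter.mp hb).2
    refine ⟨Quotient.lift b ?_, Finset.mem_coe.mpr (Finset.mem_univ _), rfl⟩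
    rintro x _ h
    obtain ⟨m, rfl⟩ := SameCycle.exists_nat_pow_eq h
    rw [Equiv.Perm.coe_pow]
    simpa using (Function.Semiconj.iterate_right (f := b) (gb := id) (congrFun hb) m x).symm
  · rw [← Finset.prod_fiberwise Finset.univ (Quotient.mk (SameCycle.setoid σ))]
    refine Finset.prod_congr rfl fun q _ => ?_
    rw [cycleLength, ← Finset.prod_const]
    exact Finset.prod_congr rfl fun k hk =>
      congrArg (fun r => l (g r)) ((Finset.mem_filter_univ _).mp hk).symm

theorem cycleSum_eq_zero_of_notMem_derangements {l : n → R} (hl : ∑ x, l x = 0) {σ : Perm κ}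
    (hσ : σ ∉ derangements κ) : cycleSum l σ = 0 := by
  classical
  obtain ⟨k, hk⟩ : ∃ k, σ k = k := by simpa [derangements] using hσ
  rw [cycleSum_eq_prod]
  exact Finset.prod_eq_zero (Finset.mem_univ (Quotient.mk _ k))
    (by simpa [cycleLength_mk_of_fixed hk] using hl)

theorem cycleSum_one_one : cycleSum (1 : n → R) (1 : Perm κ) = Fintype.card n ^ Fintype.card κ := by
  simp [cycleSum]

end CommSemiring

theorem sum_abs_pow_add_le (l : n → ℝ) (k m : ℕ) :
    ∑ x, |l x| ^ (k + m) ≤ (∑ x, |l x| ^ k) * √(∑ x, l x ^ 2) ^ m := by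
  rw [Finset.sum_mul]
  refine Finset.sum_le_sum fun x _ => ?_
  have hx : |l x| ≤ √(∑ x, l x ^ 2) :=
    Real.abs_le_sqrt (Finset.single_le_sum (fun y _ => sq_nonneg (l y)) (Finset.mem_univ x))
  rw [pow_add]
  gcongr

theorem abs_sum_pow_le (l : n → ℝ) {m : ℕ} (hm : 2 ≤ m) :
    |∑ x, l x ^ m| ≤ √(∑ x, l x ^ 2) ^ m := by
  obtain ⟨m, rfl⟩ := Nat.exists_eq_add_of_le hm
  calc |∑ x, l x ^ (2 + m)| ≤ ∑ x, |l x ^ (2 + m)| := Finset.abs_sum_le_sum_abs _ _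
    _ ≤ (∑ x, |l x| ^ 2) * √(∑ x, l x ^ 2) ^ m := by
      simpa only [abs_pow] using sum_abs_pow_add_le l 2 m
    _ = √(∑ x, l x ^ 2) ^ (2 + m) := by
      simp only [sq_abs]
      rw [pow_add, Real.sq_sqrt (Finset.sum_nonneg fun _ _ => sq_nonneg _)]

theorem abs_sum_pow_mul_le (l : n → ℝ) {m : ℕ} (hm : 3 ≤ m) :
    |∑ x, l x ^ m| * √(∑ x, l x ^ 2) ^ 3 ≤ (∑ x, |l x| ^ 3) * √(∑ x, l x ^ 2) ^ m := by
  obtain ⟨m, rfl⟩ := Nat.exists_eq_add_of_le hm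
  rw [add_comm 3 m, pow_add √_, ← mul_assoc, add_comm m 3]
  gcongr
  refine (Finset.abs_sum_le_sum_abs _ _).trans ?_
  simpa only [abs_pow] using sum_abs_pow_add_le l 3 m

variable [DecidableEq κ] [DecidableEq n]

theorem abs_cycleSum_le (l : n → ℝ) {σ : Perm κ} (hσ : σ ∈ derangements κ) :
    |cycleSum l σ| ≤ √(∑ x, l x ^ 2) ^ Fintype.card κ := by
  classical
  rw [cycleSum_eq_prod, Finset.abs_prod, ← sum_cycleLength σ, ← Finset.prod_pow_eq_pow_sum]
  exact Finset.prod_le_prod (fun _ _ => abs_nonneg _)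
    fun q _ => abs_sum_pow_le l (two_le_cycleLength hσ q)

theorem abs_cycleSum_mul_le_of_odd (l : n → ℝ) (hκ : Odd (Fintype.card κ)) {σ : Perm κ}
    (hσ : σ ∈ derangements κ) :
    |cycleSum l σ| * √(∑ x, l x ^ 2) ^ 3
      ≤ (∑ x, |l x| ^ 3) * √(∑ x, l x ^ 2) ^ Fintype.card κ := by
  classical
  obtain ⟨q, hq⟩ := exists_three_le_cycleLength hκ hσ
  rw [cycleSum_eq_prod, Finset.abs_prod, ← sum_cycleLength σ, ← Finset.prod_pow_eq_pow_sum,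
    ← Finset.mul_prod_erase _ _ (Finset.mem_univ q),
    ← Finset.mul_prod_erase _ _ (Finset.mem_univ q), mul_right_comm, ← mul_assoc]
  refine mul_le_mul (abs_sum_pow_mul_le l hq) ?_
    (Finset.prod_nonneg fun _ _ => abs_nonneg _) (by positivity)
  exact Finset.prod_le_prod (fun _ _ => abs_nonneg _)
    fun r _ => abs_sum_pow_le l (two_le_cycleLength hσ r)

theorem cycleSum_one_nonneg (σ : Perm κ) : 0 ≤ cycleSum (1 : n → ℝ) σ :=
  Finset.sum_nonneg fun _ _ => by simp

end CycleSum

section SumCycleSumOne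

open Equiv (Perm)
open Equiv.Perm (decomposeFin)

variable {n R : Type*} [Fintype n] [DecidableEq n] [CommSemiring R] {p : ℕ}

theorem cons_comp_decomposeFin_symm_eq_iff {α : Type*} (k : Fin (p + 1)) (e : Perm (Fin p)) (x : α)
    (b : Fin p → α) : (Fin.cons x b : Fin (p + 1) → α) ∘ decomposeFin.symm (k, e) = Fin.cons x b
      ↔ (Fin.cons x b : Fin (p + 1) → α) k = x ∧ b ∘ e = b := by
  simp only [funext_iff, Fin.forall_fin_succ, Function.comp_apply,
    Equiv.Perm.decomposeFin_symm_apply_zero, Equiv.Perm.decomposeFin_symm_apply_succ,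
    Fin.cons_zero, Fin.cons_succ]
  refine and_congr_right fun hk => forall_congr' fun m => ?_
  have h0 : (Fin.cons x b : Fin (p + 1) → α) 0 = (Fin.cons x b : Fin (p + 1) → α) k := hk.symm
  rw [Equiv.apply_swap_eq_self h0, Fin.cons_succ]

theorem cycleSum_one_decomposeFin_symm (k : Fin (p + 1)) (e : Perm (Fin p)) :
    cycleSum (1 : n → R) (decomposeFin.symm (k, e))
      = (if k = 0 then (Fintype.card n : R) else 1) * cycleSum (1 : n → R) e := by
  simp only [cycleSum, Pi.one_apply, Finset.prod_const_one, Finset.sum_filter]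
  rw [← (Fin.consEquiv fun _ : Fin (p + 1) => n).sum_comp, Fintype.sum_prod_type_right,
    Finset.mul_sum]
  refine Finset.sum_congr rfl fun b _ => ?_
  have hcons (x : n) : Fin.consEquiv (fun _ : Fin (p + 1) => n) (x, b) = Fin.cons x b := rfl
  simp only [hcons, cons_comp_decomposeFin_symm_eq_iff]
  refine Fin.cases ?_ (fun k' => ?_) k <;> by_cases h : b ∘ e = b <;> simp [h]

theorem sum_cycleSum_one (p : ℕ) :
    ∑ σ : Perm (Fin p), cycleSum (1 : n → R) σ = ((Fintype.card n).ascFactorial p : R) := by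
  induction p with
  | zero => simp [cycleSum]
  | succ p ih =>
    rw [← decomposeFin.symm.sum_comp, Fintype.sum_prod_type]
    simp only [cycleSum_one_decomposeFin_symm, ← Finset.mul_sum, ih]
    rw [← Finset.sum_mul, Fin.sum_univ_succ, Nat.ascFactorial_succ]
    simp [Fin.succ_ne_zero]

end SumCycleSumOne

section Counting

open Nat

theorem ascFactorial_mul_le_pow (d p : ℕ) :
    (d.ascFactorial p : ℝ) * (2 * d - p * (p - 1)) ≤ 2 * (d : ℝ) ^ (p + 1) := by
  induction p with
  | zero => simp
  | succ p ih =>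
    have hstep : ((d : ℝ) + p) * (2 * d - (p + 1) * p) ≤ (2 * d - p * (p - 1)) * d := by
      have : (0 : ℝ) ≤ p ^ 2 * (p + 1) := by positivity
      linarith
    calc ((d.ascFactorial (p + 1) : ℕ) : ℝ) * (2 * d - (p + 1 : ℕ) * ((p + 1 : ℕ) - 1))
        = d.ascFactorial p * ((d + p) * (2 * d - (p + 1) * p)) := by
          push_cast [ascFactorial_succ]; ring
      _ ≤ d.ascFactorial p * ((2 * d - p * (p - 1)) * d) := by gcongr
      _ = d.ascFactorial p * (2 * d - p * (p - 1)) * d := by ring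
      _ ≤ 2 * d ^ (p + 1) * d := by gcongr
      _ = 2 * d ^ (p + 1 + 1) := by ring

theorem ascFactorial_mul_succ_le {d p : ℕ} (hp : 1 ≤ p) (hpd : p ^ 2 ≤ d) :
    (d.ascFactorial p : ℝ) * (p + 1) ≤ 2 * p * (d : ℝ) ^ p := by
  have hd : (0 : ℝ) < d := mod_cast (Nat.pow_pos hp).trans_le hpd
  have hp' : (1 : ℝ) ≤ p := mod_cast hp
  have hpd' : (p : ℝ) ^ 2 ≤ d := mod_cast hpd
  refine le_of_mul_le_mul_right ?_ hd
  calc (d.ascFactorial p : ℝ) * (p + 1) * d = d.ascFactorial p * ((p + 1) * d) := by ring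
    _ ≤ d.ascFactorial p * (p * (2 * d - p * (p - 1))) := by
      refine mul_le_mul_of_nonneg_left ?_ (Nat.cast_nonneg _)
      linarith [mul_nonneg (sub_nonneg.mpr hp') (sub_nonneg.mpr hpd')]
    _ = p * (d.ascFactorial p * (2 * d - p * (p - 1))) := by ring
    _ ≤ p * (2 * d ^ (p + 1)) :=
      mul_le_mul_of_nonneg_left (ascFactorial_mul_le_pow d p) (Nat.cast_nonneg p)
    _ = 2 * p * d ^ p * d := by ring

theorem fifteen_le_doubleFactorial (m : ℕ) : 15 ≤ (2 * m + 5)‼ := by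
  induction m with
  | zero => decide
  | succ m ih =>
    rw [show 2 * (m + 1) + 5 = 2 * m + 5 + 2 by ring, doubleFactorial_add_two]
    exact ih.trans (Nat.le_mul_of_pos_left _ (by omega))

theorem two_mul_sq_le_centralBinom (m : ℕ) : 2 * (m + 6) * (m + 6) ≤ (m + 5).centralBinom := by
  induction m with
  | zero => decide
  | succ m ih =>
    have hrec := succ_mul_centralBinom_succ (m + 5)
    have hthree : 3 * (m + 5).centralBinom ≤ (m + 5 + 1).centralBinom := by nlinarith
    rw [show m + 1 + 5 = m + 5 + 1 by ring]
    nlinarith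

theorem two_mul_succ_le_catalan {p : ℕ} (hp : 5 ≤ p) : 2 * (p + 1) ≤ catalan p := by
  obtain ⟨m, rfl⟩ := Nat.exists_eq_add_of_le' hp
  rw [catalan_eq_centralBinom_div, Nat.le_div_iff_mul_le (by omega)]
  exact two_mul_sq_le_centralBinom m

theorem numDerangements_le_factorial (p : ℕ) : numDerangements p ≤ p ! := by
  rw [← card_derangements_fin_eq_numDerangements]
  exact (Fintype.card_subtype_le _).trans_eq (by rw [Fintype.card_perm, Fintype.card_fin])

theorem factorial_mul_le_ceil_sub_doubleFactorial {p : ℕ} (hp : 5 ≤ p) (hpo : Odd p) :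
    (p ! : ℝ) * (4 / 15) ≤ ⌈(p ! : ℝ) / Real.exp 1⌉ - ((p - 1)‼ : ℝ) := by
  have hceil : (p ! : ℝ) / 3 ≤ ⌈(p ! : ℝ) / Real.exp 1⌉ := by
    refine le_trans ?_ (Int.le_ceil _)
    gcongr
    exact Real.exp_one_lt_three.le
  have hfact : 15 * (p - 1)‼ ≤ p ! := by
    obtain ⟨k, rfl⟩ := hpo
    obtain ⟨m, rfl⟩ : ∃ m, k = m + 2 := ⟨k - 2, by omega⟩
    rw [Nat.add_sub_cancel, factorial_eq_mul_doubleFactorial]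
    exact Nat.mul_le_mul_right _ (fifteen_le_doubleFactorial m)
  have hfact' : 15 * ((p - 1)‼ : ℝ) ≤ p ! := mod_cast hfact
  linarith

theorem numDerangements_mul_le {p : ℕ} (hpo : Odd p) :
    (numDerangements p : ℝ) * ((p + 1) / 2)
      ≤ (⌈(p ! : ℝ) / Real.exp 1⌉ - ((p - 1)‼ : ℝ)) * catalan p := by
  obtain rfl | rfl | hp : p = 1 ∨ p = 3 ∨ 5 ≤ p := by obtain ⟨m, rfl⟩ := hpo; omega
  · have : (1 : ℤ) ≤ ⌈(1 ! : ℝ) / Real.exp 1⌉ := Int.one_le_ceil_iff.mpr (by positivity)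
    have : (1 : ℝ) ≤ ⌈(1 ! : ℝ) / Real.exp 1⌉ := mod_cast this
    simpa using this
  · have : (2 : ℤ) < ⌈(3 ! : ℝ) / Real.exp 1⌉ := by
      rw [Int.lt_ceil, lt_div_iff₀ (Real.exp_pos 1)]
      norm_num [Nat.factorial]
      linarith [Real.exp_one_lt_three]
    have : (3 : ℝ) ≤ ⌈(3 ! : ℝ) / Real.exp 1⌉ := mod_cast this
    rw [catalan_three, show numDerangements 3 = 2 from rfl, show (3 - 1)‼ = 2 from rfl]
    norm_num
    linarith
  · have hcat : 2 * ((p : ℝ) + 1) ≤ catalan p := mod_cast two_mul_succ_le_catalan hp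
    calc (numDerangements p : ℝ) * ((p + 1) / 2) ≤ p ! * ((p + 1) / 2) := by
          gcongr; exact numDerangements_le_factorial p
      _ ≤ p ! * (4 / 15) * (2 * (p + 1)) := by
          linarith [show (0 : ℝ) ≤ p ! * (p + 1) by positivity]
      _ ≤ (⌈(p ! : ℝ) / Real.exp 1⌉ - ((p - 1)‼ : ℝ)) * catalan p := by
          have hceil := factorial_mul_le_ceil_sub_doubleFactorial hp hpo
          exact mul_le_mul hceil hcat (by positivity) (le_trans (by positivity) hceil)

end Counting

section Convolution

/-- Where `‖c‖` is largest, the term of index `1` of the convolution dominates the others. -/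
theorem norm_mul_le_of_convolution {G E : Type*} [Group G] [Fintype G] [NormedAddCommGroup E]
    [NormedSpace ℝ E] {c t : G → E} {N : G → ℝ} (hN : ∀ g, 0 ≤ N g) {K : ℝ}
    (ht : ∀ g, t g = ∑ h, N (g * h) • c h) (hK : ∀ g, ‖t g‖ ≤ K) (hdom : ∑ g, N g ≤ 2 * N 1)
    (g : G) : ‖c g‖ * (2 * N 1 - ∑ g, N g) ≤ K := by
  classical
  obtain ⟨g₀, hg₀⟩ := Finite.exists_max fun g => ‖c g‖
  have hrest : ∑ h ∈ Finset.univ.erase g₀, N (g₀⁻¹ * h) = ∑ g, N g - N 1 := by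
    rw [← Equiv.sum_comp (Equiv.mulLeft g₀⁻¹) N, ← Finset.add_sum_erase _ _ (Finset.mem_univ g₀)]
    simp
  have hdiag : N 1 • c g₀ = t g₀⁻¹ - ∑ h ∈ Finset.univ.erase g₀, N (g₀⁻¹ * h) • c h := by
    rw [ht, ← Finset.add_sum_erase _ _ (Finset.mem_univ g₀)]
    simp
  have hmax : N 1 * ‖c g₀‖ ≤ K + (∑ g, N g - N 1) * ‖c g₀‖ := by
    rw [← hrest, Finset.sum_mul]
    calc N 1 * ‖c g₀‖ = ‖N 1 • c g₀‖ := by rw [norm_smul, Real.norm_of_nonneg (hN 1)]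
      _ ≤ ‖t g₀⁻¹‖ + ‖∑ h ∈ Finset.univ.erase g₀, N (g₀⁻¹ * h) • c h‖ := hdiag ▸ norm_sub_le _ _
      _ ≤ K + ∑ h ∈ Finset.univ.erase g₀, N (g₀⁻¹ * h) * ‖c g₀‖ := by
        refine add_le_add (hK _) (norm_sum_le_of_le _ fun h _ => ?_)
        rw [norm_smul, Real.norm_of_nonneg (hN _)]
        exact mul_le_mul_of_nonneg_left (hg₀ h) (hN _)
  linarith [mul_le_mul_of_nonneg_right (hg₀ g) (sub_nonneg.mpr hdom)]

end Convolution

section TwirlMoments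

open Equiv (Perm)

variable {n κ : Type*} [Fintype n] [DecidableEq n] [Fintype κ] [DecidableEq κ]

theorem trace_tensorPow_mul_tensorPerm_of_isHermitian {A : Matrix n n ℂ} (hA : A.IsHermitian)
    (σ : Perm κ) :
    (tensorPow κ A * tensorPerm n ℂ σ).trace = (cycleSum hA.eigenvalues σ : ℝ) := by
  conv_lhs => rw [hA.spectral_theorem, Unitary.conjStarAlgAut_apply]
  rw [trace_tensorPow_conj_mul_tensorPerm (Unitary.coe_star_mul_self _),
    trace_tensorPow_diagonal_mul_tensorPerm]
  simp [cycleSum]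

theorem sum_eigenvalues_eq_zero {A : Matrix n n ℂ} (hA : A.IsHermitian) (hA0 : A.trace = 0) :
    ∑ x, hA.eigenvalues x = 0 := by
  have h := hA.trace_eq_sum_eigenvalues
  rw [hA0] at h
  exact Complex.ofReal_eq_zero.mp ((Complex.ofReal_sum _ _).trans h.symm)

theorem trace_sq_eq_sum_eigenvalues_sq {A : Matrix n n ℂ} (hA : A.IsHermitian) :
    (A ^ 2).trace.re = ∑ x, hA.eigenvalues x ^ 2 := by
  conv_lhs =>
    rw [hA.spectral_theorem, ← map_pow, diagonal_pow, Unitary.conjStarAlgAut_apply,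
      trace_mul_cycle, Unitary.coe_star_mul_self, Matrix.one_mul, trace_diagonal]
  simp [← Complex.ofReal_pow]

theorem sum_eigenvalues_sq_pos {A : Matrix n n ℂ} (hA : A.IsHermitian) (hAne : A ≠ 0) :
    0 < ∑ x, hA.eigenvalues x ^ 2 := by
  obtain ⟨x, hx⟩ := Function.ne_iff.mp (mt hA.eigenvalues_eq_zero_iff.mp hAne)
  exact Finset.sum_pos' (fun _ _ => sq_nonneg _) ⟨x, Finset.mem_univ x, sq_pos_of_ne_zero hx⟩

variable [MeasurableSpace (unitaryGroup n ℂ)] [BorelSpace (unitaryGroup n ℂ)]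
  (μ : Measure (unitaryGroup n ℂ)) [μ.IsMulLeftInvariant]

theorem integral_trace_pow_eq_sum [IsFiniteMeasure μ] (ι : κ ↪ n) {A : Matrix n n ℂ}
    (hA : A.IsHermitian) (B : Matrix n n ℂ) :
    ∫ U : unitaryGroup n ℂ, (U.1 * B * star U.1 * A).trace ^ Fintype.card κ ∂μ
      = ∑ σ : Perm κ, twirl κ μ B (ι ∘ σ) ι * (cycleSum hA.eigenvalues σ : ℝ) := by
  simp only [← trace_tensorPow, trace_mul_comm _ A, tensorPow_mul A]
  rw [← trace_mul_twirl]
  conv_lhs =>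
    rw [eq_sum_smul_tensorPerm_of_commute_tensorPow (fun A => commute_tensorPow_twirl μ A B) ι]
  simp only [Finset.mul_sum, trace_sum, Matrix.mul_smul, trace_smul, smul_eq_mul,
    trace_tensorPow_mul_tensorPerm_of_isHermitian hA]

variable [IsProbabilityMeasure μ]

theorem cycleSum_eigenvalues_eq_sum (ι : κ ↪ n) {B : Matrix n n ℂ} (hB : B.IsHermitian)
    (τ : Perm κ) :
    ((cycleSum hB.eigenvalues τ : ℝ) : ℂ)
      = ∑ σ : Perm κ, cycleSum (1 : n → ℝ) (τ * σ) • twirl κ μ B (ι ∘ σ) ι := by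
  have htrace : (tensorPerm n ℂ τ * twirl κ μ B).trace = (cycleSum hB.eigenvalues τ : ℝ) := by
    rw [trace_mul_twirl]
    simp only [trace_mul_comm (tensorPerm n ℂ τ), Unitary.coe_star_mul_self,
      trace_tensorPow_conj_mul_tensorPerm, trace_tensorPow_mul_tensorPerm_of_isHermitian hB,
      integral_const, probReal_univ, one_smul]
  rw [← htrace, trace_mul_comm]
  conv_lhs =>
    rw [eq_sum_smul_tensorPerm_of_commute_tensorPow (fun A => commute_tensorPow_twirl μ A B) ι]
  simp only [Finset.sum_mul, trace_sum, Matrix.smul_mul, trace_smul, tensorPerm_mul_tensorPerm,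
    trace_tensorPerm]
  simp [cycleSum, mul_comm]

variable {p : ℕ}

theorem norm_twirl_apply_le (hp : 1 ≤ p) (hpn : p ^ 2 ≤ Fintype.card n) {B : Matrix n n ℂ}
    (hB : B.IsHermitian) (hB0 : B.trace = 0) (ι : Fin p ↪ n) (σ : Perm (Fin p)) :
    ‖twirl (Fin p) μ B (ι ∘ σ) ι‖
      ≤ (p + 1) / 2 * (√(∑ x, hB.eigenvalues x ^ 2) / Fintype.card n) ^ p := by
  have hn : 0 < Fintype.card n := (Nat.pow_pos hp).trans_le hpn
  have hasc := ascFactorial_mul_succ_le hp hpn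
  have hcyc (τ : Perm (Fin p)) : ‖((cycleSum hB.eigenvalues τ : ℝ) : ℂ)‖
      ≤ √(∑ x, hB.eigenvalues x ^ 2) ^ p := by
    rw [Complex.norm_real, Real.norm_eq_abs]
    by_cases hτ : τ ∈ derangements (Fin p)
    · simpa using abs_cycleSum_le hB.eigenvalues hτ
    · rw [cycleSum_eq_zero_of_notMem_derangements (sum_eigenvalues_eq_zero hB hB0) hτ, abs_zero]
      positivity
  have hconv := norm_mul_le_of_convolution cycleSum_one_nonneg
    (cycleSum_eigenvalues_eq_sum μ ι hB) hcyc ?_ σ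
  · rw [cycleSum_one_one, sum_cycleSum_one, Fintype.card_fin] at hconv
    rw [div_pow, ← mul_div_assoc, le_div_iff₀ (by positivity)]
    have hnorm := norm_nonneg (twirl (Fin p) μ B (ι ∘ σ) ι)
    linarith [mul_le_mul_of_nonneg_left hconv (by positivity : (0 : ℝ) ≤ p + 1),
      mul_le_mul_of_nonneg_left hasc hnorm]
  · rw [cycleSum_one_one, sum_cycleSum_one, Fintype.card_fin]
    refine le_of_mul_le_mul_right (hasc.trans ?_) (by positivity : (0 : ℝ) < p + 1)
    linarith [show (0 : ℝ) ≤ (Fintype.card n : ℝ) ^ p by positivity]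

theorem norm_integral_trace_pow_mul_le (hpo : Odd p) (hpn : p ^ 2 ≤ Fintype.card n)
    {A B : Matrix n n ℂ} (hA : A.IsHermitian) (hA0 : A.trace = 0) (hB : B.IsHermitian)
    (hB0 : B.trace = 0) :
    ‖∫ U : unitaryGroup n ℂ, (U.1 * B * star U.1 * A).trace ^ p ∂μ‖
        * √(∑ x, hA.eigenvalues x ^ 2) ^ 3
      ≤ numDerangements p * ((p + 1) / 2)
        * (√(∑ x, hA.eigenvalues x ^ 2) * √(∑ x, hB.eigenvalues x ^ 2) / Fintype.card n) ^ p
        * ∑ x, |hA.eigenvalues x| ^ 3 := by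
  obtain ⟨ι⟩ : Nonempty (Fin p ↪ n) := by
    refine Function.Embedding.nonempty_of_card_le ?_
    rw [Fintype.card_fin]
    exact (Nat.le_self_pow two_ne_zero p).trans hpn
  set a := √(∑ x, hA.eigenvalues x ^ 2)
  set b := √(∑ x, hB.eigenvalues x ^ 2)
  set M := (p + 1) / 2 * (b / Fintype.card n) ^ p * ((∑ x, |hA.eigenvalues x| ^ 3) * a ^ p)
  have hterm (σ : Perm (Fin p)) :
      ‖twirl (Fin p) μ B (ι ∘ σ) ι * (cycleSum hA.eigenvalues σ : ℝ)‖ * a ^ 3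
        ≤ if σ ∈ derangements (Fin p) then M else 0 := by
    rw [norm_mul, Complex.norm_real, Real.norm_eq_abs, mul_assoc]
    split_ifs with hσ
    · have hcyc := abs_cycleSum_mul_le_of_odd hA.eigenvalues (by simpa using hpo) hσ
      rw [Fintype.card_fin] at hcyc
      exact mul_le_mul (norm_twirl_apply_le μ hpo.pos hpn hB hB0 ι σ) hcyc
        (by positivity) (by positivity)
    · rw [cycleSum_eq_zero_of_notMem_derangements (sum_eigenvalues_eq_zero hA hA0) hσ]
      simp
  have hint := integral_trace_pow_eq_sum μ ι hA B
  rw [Fintype.card_fin] at hint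
  calc _ ≤ (∑ σ : Perm (Fin p), ‖twirl (Fin p) μ B (ι ∘ σ) ι
          * (cycleSum hA.eigenvalues σ : ℝ)‖) * a ^ 3 := by
        rw [hint]
        exact mul_le_mul_of_nonneg_right (norm_sum_le _ _) (by positivity)
    _ ≤ ∑ σ : Perm (Fin p), if σ ∈ derangements (Fin p) then M else 0 := by
      rw [Finset.sum_mul]
      exact Finset.sum_le_sum fun σ _ => hterm σ
    _ = numDerangements p * M := by
      rw [← Finset.sum_filter, Finset.sum_const, nsmul_eq_mul, ← Fintype.card_subtype,
        ← card_derangements_fin_eq_numDerangements]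
    _ = _ := by ring

end TwirlMoments

section Centering

variable {n R : Type*} [Fintype n]

theorem eq_zero_of_trace_eq_zero [Subsingleton n] [AddCommMonoid R] {A : Matrix n n R}
    (hA : A.trace = 0) : A = 0 := by
  ext i j
  obtain rfl := Subsingleton.elim i j
  rwa [trace, Fintype.sum_subsingleton _ i] at hA

theorem ofReal_re_trace_mul {A B : Matrix n n ℂ} (hA : A.IsHermitian) (hB : B.IsHermitian) :
    ((A * B).trace.re : ℂ) = (A * B).trace := by
  refine Complex.conj_eq_iff_re.mp ?_
  rw [starRingEnd_apply, ← trace_conjTranspose, conjTranspose_mul, hA.eq, hB.eq, trace_mul_comm]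

variable [DecidableEq n]

theorem trace_conj_sub_smul_one_mul {A : Matrix n n ℂ} (hA : A.trace = 0) (ρ : Matrix n n ℂ)
    (c : ℂ) (U : unitaryGroup n ℂ) :
    (U.1 * (ρ - c • (1 : Matrix n n ℂ)) * star U.1 * A).trace = (U.1 * ρ * star U.1 * A).trace := by
  simp [Matrix.mul_sub, Matrix.sub_mul, hA]

theorem trace_conj_mul_sub_smul_one {ρ : Matrix n n ℂ} (hρtr : ρ.trace = 1) (H : Matrix n n ℂ)
    (h : ℂ) (U : unitaryGroup n ℂ) :
    (U.1 * ρ * star U.1 * (H - h • (1 : Matrix n n ℂ))).trace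
      = (U.1 * ρ * star U.1 * H).trace - h := by
  simp [Matrix.mul_sub, trace_mul_cycle U.1, hρtr]

theorem ofReal_re_trace_conj_mul_sub {H ρ : Matrix n n ℂ} (hρ : ρ.IsHermitian)
    (hρtr : ρ.trace = 1) {h : ℂ} (hA : (H - h • (1 : Matrix n n ℂ)).IsHermitian)
    (hA0 : (H - h • (1 : Matrix n n ℂ)).trace = 0) (c : ℂ) (U : unitaryGroup n ℂ) :
    (((U.1 * ρ * star U.1 * H).trace.re - h.re : ℝ) : ℂ)
      = (U.1 * (ρ - c • (1 : Matrix n n ℂ)) * star U.1 * (H - h • (1 : Matrix n n ℂ))).trace := by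
  have hreal := ofReal_re_trace_mul (isHermitian_mul_mul_conjTranspose U.1 hρ) hA
  rw [← star_eq_conjTranspose] at hreal
  rw [trace_conj_sub_smul_one_mul hA0, ← hreal, trace_conj_mul_sub_smul_one hρtr, Complex.sub_re]

end Centering

theorem sqrt_eta {d : ℕ} {Θ : Matrix (Fin d) (Fin d) ℂ} (hΘ : Θ.IsHermitian) :
    √(eta hΘ) = (∑ i, |hΘ.eigenvalues i| ^ 3) / √(∑ i, hΘ.eigenvalues i ^ 2) ^ 3 := by
  have hcube : (∑ i, hΘ.eigenvalues i ^ 2) ^ 3 = (√(∑ i, hΘ.eigenvalues i ^ 2) ^ 3) ^ 2 := by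
    rw [pow_right_comm, Real.sq_sqrt (Finset.sum_nonneg fun _ _ => sq_nonneg _)]
  rw [eta, hcube, ← div_pow, Real.sqrt_sq (by positivity)]

theorem sqrt_mul_sqrt_div_pow_le {S T x : ℝ} (hS : 0 ≤ S) (hT : 0 ≤ T) (hx : 1 < x) (p : ℕ) :
    (√S * √T / x) ^ p ≤ (S * T / (x ^ 2 - 1)) ^ ((p : ℝ) / 2) := by
  have hx' : 0 < x ^ 2 - 1 := by nlinarith
  rw [Real.rpow_div_two_eq_sqrt _ (by positivity), Real.rpow_natCast]
  refine pow_le_pow_left₀ (by positivity) (Real.le_sqrt_of_sq_le ?_) p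
  rw [div_pow, mul_pow, Real.sq_sqrt hS, Real.sq_sqrt hT]
  gcongr
  linarith

theorem mul_sub_le_mul_inv_mul {f c k a x y : ℝ} (hf : f ≠ 0) (h0 : 0 ≤ a * ((c - f) * k))
    (hx0 : 0 ≤ x) (hx1 : x < 1) (hy : 0 ≤ y) :
    a * ((c - f) * k) ≤ f * a * (1 - x)⁻¹ * (c / f - 1) * k * (1 + y) := by
  have hinv : 1 ≤ (1 - x)⁻¹ := (one_le_inv₀ (by linarith)).mpr (sub_le_self _ hx0)
  have hfactor : 1 ≤ (1 - x)⁻¹ * (1 + y) :=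
    one_le_mul_of_one_le_of_one_le hinv (le_add_of_nonneg_right hy)
  refine (le_mul_of_one_le_right h0 hfactor).trans_eq ?_
  field_simp

theorem odd_moment_bound_general (d : ℕ) (μ : Measure (unitaryGroup (Fin d) ℂ))
    [μ.IsMulLeftInvariant] [IsProbabilityMeasure μ] (H ρ : Matrix (Fin d) (Fin d) ℂ)
    (hρ : ρ.IsHermitian) (hρtr : ρ.trace = 1)
    (hΔH : (H - (H.trace / (d : ℂ)) • (1 : Matrix (Fin d) (Fin d) ℂ)).IsHermitian)
    (hΔHne : H - (H.trace / (d : ℂ)) • (1 : Matrix (Fin d) (Fin d) ℂ) ≠ 0)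
    (p : ℕ) (hpo : Odd p) (hpd : p ^ 2 ≤ d) :
    |∫ U : unitaryGroup (Fin d) ℂ,
        ((U.1 * ρ * star U.1 * H).trace.re - H.trace.re / d) ^ p ∂μ|
      ≤ (((H - (H.trace / (d : ℂ)) • 1) ^ 2).trace.re * ((ρ - (d : ℂ)⁻¹ • 1) ^ 2).trace.re
          / ((d : ℝ) ^ 2 - 1)) ^ ((p : ℝ) / 2) * √(eta hΔH)
        * ((⌈(p.factorial : ℝ) / Real.exp 1⌉ - (Nat.doubleFactorial (p - 1) : ℝ)) * catalan p) := by
  have : NeZero d := ⟨((Nat.pow_pos hpo.pos).trans_le hpd).ne'⟩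
  have hΔH0 : (H - (H.trace / (d : ℂ)) • (1 : Matrix (Fin d) (Fin d) ℂ)).trace = 0 := by simp
  have hΔρ0 : (ρ - (d : ℂ)⁻¹ • (1 : Matrix (Fin d) (Fin d) ℂ)).trace = 0 := by simp [hρtr]
  have hΔρ : (ρ - (d : ℂ)⁻¹ • (1 : Matrix (Fin d) (Fin d) ℂ)).IsHermitian :=
    hρ.sub (isHermitian_one.smul (by simp [IsSelfAdjoint]))
  have hd : 1 < d := by
    by_contra! hd
    have := Fin.subsingleton_iff_le_one.mpr hd
    exact hΔHne (eq_zero_of_trace_eq_zero hΔH0)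
  have hsq := sum_eigenvalues_sq_pos hΔH hΔHne
  have hmoment := norm_integral_trace_pow_mul_le μ hpo (by simpa using hpd) hΔH hΔH0 hΔρ hΔρ0
  simp only [← ofReal_re_trace_conj_mul_sub hρ hρtr hΔH hΔH0, Complex.div_natCast_re,
    ← Complex.ofReal_pow, integral_complex_ofReal, Complex.norm_real, Real.norm_eq_abs] at hmoment
  rw [← le_div_iff₀ (by positivity), mul_div_assoc, ← sqrt_eta, Fintype.card_fin] at hmoment
  refine hmoment.trans ?_
  rw [trace_sq_eq_sum_eigenvalues_sq hΔH, trace_sq_eq_sum_eigenvalues_sq hΔρ,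
    mul_comm (_ * √_), ← mul_assoc]
  have hpow := sqrt_mul_sqrt_div_pow_le hsq.le
    (Finset.univ.sum_nonneg fun i _ => sq_nonneg (hΔρ.eigenvalues i)) (Nat.one_lt_cast.mpr hd) p
  have hcount := numDerangements_mul_le hpo
  gcongr
  exact le_trans (by positivity) hcount

/-- **Statement 13.** General-state odd central moments are small: for odd `p` with `3 ≤ p`,
`p² ≤ d` and `6p^{7/2} < d²`,
`|Σ^(p)| ≤ G_p·√η_{ΔH}·(1 − 6p^{7/2}/d²)⁻¹·(⌈p!/e⌉/(p−1)!! − 1)·Cat_p·(1 + p²/d)`. -/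
theorem odd_moment_bound (d : ℕ) (hd : 2 ≤ d)
    (μ : Measure (Matrix.unitaryGroup (Fin d) ℂ))
    [μ.IsHaarMeasure] [IsProbabilityMeasure μ]
    (H ρ : Matrix (Fin d) (Fin d) ℂ) (hH : H.IsHermitian)
    (hρ : ρ.PosSemidef) (hρtr : ρ.trace = 1)
    (hΔH : (H - (H.trace / (d : ℂ)) • (1 : Matrix (Fin d) (Fin d) ℂ)).IsHermitian)
    (hΔHne : H - (H.trace / (d : ℂ)) • (1 : Matrix (Fin d) (Fin d) ℂ) ≠ 0)
    (hΔρne : ρ - ((d : ℂ))⁻¹ • (1 : Matrix (Fin d) (Fin d) ℂ) ≠ 0)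
    (p : ℕ) (hp : 3 ≤ p) (hpo : Odd p)
    (hpd : p ^ 2 ≤ d) (hpd' : 6 * (p : ℝ) ^ ((7 : ℝ) / 2) < (d : ℝ) ^ 2)
    (Sp S2 Gp : ℝ)
    (hSp : Sp = ∫ U : Matrix.unitaryGroup (Fin d) ℂ,
        (((U : Matrix (Fin d) (Fin d) ℂ) * ρ
            * star (U : Matrix (Fin d) (Fin d) ℂ) * H).trace.re - H.trace.re / d) ^ p ∂μ)
    (hS2 : S2 = (((H - (H.trace / (d : ℂ)) • 1) ^ 2).trace.re
        * ((ρ - ((d : ℂ))⁻¹ • 1) ^ 2).trace.re) / ((d : ℝ) ^ 2 - 1))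
    (hGp : Gp = (Nat.doubleFactorial (p - 1) : ℝ) * S2 ^ ((p : ℝ) / 2)) :
    |Sp| ≤ Gp * Real.sqrt (eta hΔH)
        * (1 - 6 * (p : ℝ) ^ ((7 : ℝ) / 2) / (d : ℝ) ^ 2)⁻¹
        * ((⌈(p.factorial : ℝ) / Real.exp 1⌉ : ℝ)
            / (Nat.doubleFactorial (p - 1) : ℝ) - 1)
        * (catalan p : ℝ) * (1 + (p : ℝ) ^ 2 / d) := by
  subst hSp hS2 hGp
  rw [mul_assoc (Nat.doubleFactorial (p - 1) : ℝ)]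
  have hbound := odd_moment_bound_general d μ H ρ hρ.isHermitian hρtr hΔH hΔHne p hpo hpd
  exact hbound.trans (mul_sub_le_mul_inv_mul (by positivity) ((abs_nonneg _).trans hbound)
    (by positivity) ((div_lt_one (by positivity)).mpr hpd') (by positivity))
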